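/- arXiv:2209.09942 — 3 statements merged into one kernel-verified Lean document; each statement's English description precedes it below -/
import Mathlib

section
/- Let ρ_AB be a density matrix on ℂ^m ⊗ ℂ^n and let N be a Hermitian m×m matrix such that Tr(σ N) ≥ 0 for every σ ∈ Λ_A(ρ_AB). Then the matrix Tr_A[(N ⊗ I_B) ρ_AB] is positive semidefinite. -/
open Matrix
open scoped Kronecker ComplexOrder BigOperators

noncomputable section

/-- A density matrix: positive semidefinite with trace 1. -/
def IsDensity {d : Type*} [Fintype d] [DecidableEq d] (ρ : Matrix d d ℂ) : Prop :=
  ρ.PosSemidef ∧ ρ.trace = 1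

/-- Partial trace over the second (B) factor. -/
def trB {m n : ℕ} (ρ : Matrix (Fin m × Fin n) (Fin m × Fin n) ℂ) :
    Matrix (Fin m) (Fin m) ℂ := fun i j => ∑ k, ρ (i, k) (j, k)

/-- Partial trace over the first (A) factor. -/
def trA {m n : ℕ} (ρ : Matrix (Fin m × Fin n) (Fin m × Fin n) ℂ) :
    Matrix (Fin n) (Fin n) ℂ := fun k l => ∑ i, ρ (i, k) (i, l)

/-- The set of states remotely preparable on Alice's side. -/
def LambdaA {m n : ℕ} (ρ : Matrix (Fin m × Fin n) (Fin m × Fin n) ℂ) :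
    Set (Matrix (Fin m) (Fin m) ℂ) :=
  {σ | IsDensity σ ∧ ∃ E : Matrix (Fin n) (Fin n) ℂ, E.PosSemidef ∧
    σ = trB (((1 : Matrix (Fin m) (Fin m) ℂ) ⊗ₖ E) * ρ)}

/-- The set of states remotely preparable on Bob's side. -/
def LambdaB {m n : ℕ} (ρ : Matrix (Fin m × Fin n) (Fin m × Fin n) ℂ) :
    Set (Matrix (Fin n) (Fin n) ℂ) :=
  {σ | IsDensity σ ∧ ∃ E : Matrix (Fin m) (Fin m) ℂ, E.PosSemidef ∧
    σ = trA ((E ⊗ₖ (1 : Matrix (Fin n) (Fin n) ℂ)) * ρ)}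

/-- A preparation-and-measurement noncontextual model for a set `K` of density matrices. -/
def HasNCModel {d : ℕ} (K : Set (Matrix (Fin d) (Fin d) ℂ)) : Prop :=
  ∃ (L : ℕ) (N ω : Fin L → Matrix (Fin d) (Fin d) ℂ),
    (∀ l, (N l).IsHermitian) ∧ (∀ l, IsDensity (ω l)) ∧
    (∀ ρ ∈ K, ∀ l, 0 ≤ (ρ * N l).trace) ∧
    (∀ ρ ∈ K, ∑ l, (ρ * N l).trace = 1) ∧
    (∀ ρ ∈ K, ∀ M : Matrix (Fin d) (Fin d) ℂ, M.PosSemidef → (1 - M).PosSemidef →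
      (ρ * M).trace = ∑ l, (ρ * N l).trace * (ω l * M).trace)

/-- Separability of a bipartite density matrix. -/
def Separable {m n : ℕ} (ρ : Matrix (Fin m × Fin n) (Fin m × Fin n) ℂ) : Prop :=
  ∃ (L : ℕ) (ω : Fin L → Matrix (Fin m) (Fin m) ℂ)
    (κ : Fin L → Matrix (Fin n) (Fin n) ℂ),
    (∀ l, IsDensity (ω l)) ∧ (∀ l, (κ l).PosSemidef) ∧ ρ = ∑ l, ω l ⊗ₖ κ l

theorem trA_apply' {m n : ℕ} (ρ : Matrix (Fin m × Fin n) (Fin m × Fin n) ℂ)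
    (N : Matrix (Fin m) (Fin m) ℂ) (k l : Fin n) :
    trA ((N ⊗ₖ (1 : Matrix (Fin n) (Fin n) ℂ)) * ρ) k l
      = ∑ i, ∑ j, N i j * ρ (j, k) (i, l) := by
  simp [trA, Matrix.mul_apply, Fintype.sum_prod_type, Matrix.one_apply]

theorem trB_apply' {m n : ℕ} (ρ : Matrix (Fin m × Fin n) (Fin m × Fin n) ℂ)
    (E : Matrix (Fin n) (Fin n) ℂ) (i j : Fin m) :
    trB (((1 : Matrix (Fin m) (Fin m) ℂ) ⊗ₖ E) * ρ) i j
      = ∑ k, ∑ l, E k l * ρ (i, l) (j, k) := by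
  unfold trB
  refine Finset.sum_congr rfl fun k _ => ?_
  simp only [Matrix.mul_apply, Fintype.sum_prod_type, Matrix.kroneckerMap_apply]
  rw [Finset.sum_eq_single i]
  · simp
  · intro b _ hb
    simp [Matrix.one_apply_ne hb.symm]
  · simp

theorem trB_smul' {m n : ℕ} (ρ : Matrix (Fin m × Fin n) (Fin m × Fin n) ℂ)
    (E : Matrix (Fin n) (Fin n) ℂ) (c : ℂ) :
    trB (((1 : Matrix (Fin m) (Fin m) ℂ) ⊗ₖ (c • E)) * ρ)
      = c • trB (((1 : Matrix (Fin m) (Fin m) ℂ) ⊗ₖ E) * ρ) := by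
  ext i j
  rw [Matrix.smul_apply, trB_apply', trB_apply']
  simp [Finset.mul_sum, mul_assoc]

theorem trB_posSemidef {m n : ℕ} (ρ : Matrix (Fin m × Fin n) (Fin m × Fin n) ℂ)
    (hρ : ρ.PosSemidef) (v : Fin n → ℂ) :
    (trB (((1 : Matrix (Fin m) (Fin m) ℂ) ⊗ₖ (vecMulVec v (star v))) * ρ)).PosSemidef := by
  have h := hρ.conjTranspose_mul_mul_same
    (Matrix.of fun (p : Fin m × Fin n) (j : Fin m) => if p.1 = j then v p.2 else 0)
  convert h using 1
  ext i j
  rw [trB_apply']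
  simp only [Matrix.mul_apply, Fintype.sum_prod_type, Matrix.conjTranspose_apply, Matrix.of_apply]
  rw [Finset.sum_eq_single j]
  · refine Finset.sum_congr rfl fun k _ => ?_
    rw [Finset.sum_eq_single i]
    · simp only [if_true, Finset.sum_mul]
      refine Finset.sum_congr rfl fun l _ => ?_
      simp [vecMulVec_apply]
      ring
    · intro b _ hb
      simp [hb]
    · simp
  · intro b _ hb
    simp [hb]
  · simp

theorem trace_swap {m n : ℕ} (ρ : Matrix (Fin m × Fin n) (Fin m × Fin n) ℂ)
    (N : Matrix (Fin m) (Fin m) ℂ) (v : Fin n → ℂ) :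
    star v ⬝ᵥ ((trA ((N ⊗ₖ (1 : Matrix (Fin n) (Fin n) ℂ)) * ρ)) *ᵥ v)
      = (trB (((1 : Matrix (Fin m) (Fin m) ℂ) ⊗ₖ (vecMulVec v (star v))) * ρ) * N).trace := by
  rw [Matrix.trace_mul_comm]
  simp only [Matrix.trace, Matrix.diag, Matrix.mul_apply, trB_apply', dotProduct, mulVec,
    trA_apply', vecMulVec_apply, Finset.mul_sum, Finset.sum_mul, Pi.star_apply]
  have e : ∀ f : Fin n → Fin n → Fin m → Fin m → ℂ,
      ∑ a, ∑ b, ∑ c, ∑ d, f a b c d = ∑ c, ∑ d, ∑ b, ∑ a, f a b c d := by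
    intro f
    calc _ = ∑ a, ∑ c, ∑ d, ∑ b, f a b c d := by
          refine Finset.sum_congr rfl fun a _ => ?_
          rw [Finset.sum_comm]
          exact Finset.sum_congr rfl fun c _ => Finset.sum_comm
      _ = _ := by
          rw [Finset.sum_comm]
          refine Finset.sum_congr rfl fun c _ => ?_
          rw [Finset.sum_comm]
          exact Finset.sum_congr rfl fun d _ => Finset.sum_comm
  rw [e]
  refine Finset.sum_congr rfl fun c _ => Finset.sum_congr rfl fun d _ =>
    Finset.sum_congr rfl fun b _ => Finset.sum_congr rfl fun a _ => ?_
  ring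

theorem partialTrace_posSemidef_of_nonneg_on_LambdaA {m n : ℕ}
    (ρ : Matrix (Fin m × Fin n) (Fin m × Fin n) ℂ) (hρ : IsDensity ρ)
    (N : Matrix (Fin m) (Fin m) ℂ) (hN : N.IsHermitian)
    (hpos : ∀ σ ∈ LambdaA ρ, 0 ≤ (σ * N).trace) :
    (trA ((N ⊗ₖ (1 : Matrix (Fin n) (Fin n) ℂ)) * ρ)).PosSemidef := by
  
  have hH : (trA ((N ⊗ₖ (1 : Matrix (Fin n) (Fin n) ℂ)) * ρ)).IsHermitian := by
    ext k l
    rw [Matrix.conjTranspose_apply, trA_apply', trA_apply', Finset.sum_comm]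
    simp only [star_sum, star_mul', hN.apply, hρ.1.1.apply]
  refine Matrix.PosSemidef.of_dotProduct_mulVec_nonneg hH fun v => ?_
  rw [trace_swap]
  have hP := trB_posSemidef ρ hρ.1 v
  set S := trB (((1 : Matrix (Fin m) (Fin m) ℂ) ⊗ₖ (vecMulVec v (star v))) * ρ) with hS
  have ht := hP.trace_nonneg
  by_cases h0 : S.trace = 0
  · rw [hP.trace_eq_zero_iff.1 h0]
    simp
  have hi : 0 ≤ S.trace⁻¹ := inv_nonneg.2 ht
  have key := hpos (S.trace⁻¹ • S) ⟨⟨hP.smul hi, by simp [h0]⟩, S.trace⁻¹ • vecMulVec v (star v),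
    (posSemidef_vecMulVec_self_star v).smul hi, by rw [trB_smul']⟩
  have h2 := mul_nonneg ht key
  rwa [Matrix.smul_mul, Matrix.trace_smul, smul_eq_mul, mul_inv_cancel_left₀ h0] at h2
end
end

section
/- Let ρ_AB be a separable density matrix on ℂ^m ⊗ ℂ^n. For t ∈ {1,2,3} and b ∈ {0,1}, let E_{t,b} be positive semidefinite n×n matrices such that (E_{t,0} + E_{t,1})/2 equals one fixed matrix E_* for all t, and let M_{t,b} be positive semidefinite m×m matrices such that M_{t,0} + M_{t,1} = I_A for each t and (1/3) ∑_{t=1}^3 M_{t,b} = I_A/2 for each b. Then ∑_{t=1}^3 ∑_{b=0}^1 Tr[(M_{t,b} ⊗ E_{t,b}) ρ_AB] ≤ 5 Tr[(I_A ⊗ E_*) ρ_AB]. -/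
open Matrix
open scoped Kronecker ComplexOrder BigOperators

noncomputable section

open scoped MatrixOrder Matrix.Norms.L2Operator in
theorem aux_trace_nonneg {d : ℕ} {A B : Matrix (Fin d) (Fin d) ℂ}
    (hA : A.PosSemidef) (hB : B.PosSemidef) : 0 ≤ (A * B).trace := by
  obtain ⟨C, rfl⟩ := CStarAlgebra.nonneg_iff_eq_star_mul_self.mp hA.nonneg
  rw [Matrix.star_eq_conjTranspose]
  rw [Matrix.mul_assoc, Matrix.trace_mul_comm]
  exact (hB.mul_mul_conjTranspose_same C).trace_nonneg

theorem aux_step {p p' q q' e : ℝ} (h : p + p' = 1) (hq : 0 ≤ q) (hq' : 0 ≤ q')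
    (he : q + q' = 2 * e) : p * q + p' * q' ≤ 2 * e * max p p' := by
  rw [← he, add_mul, mul_comm p, mul_comm p']
  gcongr
  · exact le_max_left _ _
  · exact le_max_right _ _

theorem aux_real (p q : Fin 3 → Fin 2 → ℝ) (e : ℝ) (hp : ∀ t b, 0 ≤ p t b)
    (hq : ∀ t b, 0 ≤ q t b) (h1 : ∀ t, p t 0 + p t 1 = 1)
    (h2 : ∀ b, ∑ t, p t b = 3 / 2) (h3 : ∀ t, q t 0 + q t 1 = 2 * e) :
    ∑ t, ∑ b, p t b * q t b ≤ 5 * e := by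
  have he : 0 ≤ e := by linarith [h3 0, hq 0 0, hq 0 1]
  have s := fun t => aux_step (h1 t) (hq t 0) (hq t 1) (h3 t)
  have hm : max (p 0 0) (p 0 1) + max (p 1 0) (p 1 1) + max (p 2 0) (p 2 1) ≤ 5 / 2 := by
    have a := h2 0
    have b := h2 1
    simp only [Fin.sum_univ_three] at a b
    rcases max_choice (p 0 0) (p 0 1) with h | h <;>
    rcases max_choice (p 1 0) (p 1 1) with h' | h' <;>
    rcases max_choice (p 2 0) (p 2 1) with h'' | h'' <;>
    rw [h, h', h''] <;>
    linarith [h1 0, h1 1, h1 2, hp 0 0, hp 0 1, hp 1 0, hp 1 1, hp 2 0, hp 2 1]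
  simp only [Fin.sum_univ_three, Fin.sum_univ_two]
  have := mul_le_mul_of_nonneg_left hm (by linarith : 0 ≤ 2 * e)
  linarith [s 0, s 1, s 2]

theorem aux_complex (p q : Fin 3 → Fin 2 → ℂ) (e : ℂ) (hp : ∀ t b, 0 ≤ p t b)
    (hq : ∀ t b, 0 ≤ q t b) (h1 : ∀ t, p t 0 + p t 1 = 1)
    (h2 : ∀ b, ∑ t, p t b = 3 / 2) (h3 : ∀ t, q t 0 + q t 1 = 2 * e) :
    ∑ t, ∑ b, p t b * q t b ≤ 5 * e := by
  have hl : ∀ z : ℂ, 0 ≤ z → ∃ r : ℝ, 0 ≤ r ∧ z = r := fun z hz =>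
    ⟨z.re, (Complex.nonneg_iff.mp hz).1, Complex.ext rfl (by simp [(Complex.nonneg_iff.mp hz).2])⟩
  have hP := fun t b => hl _ (hp t b)
  have hQ := fun t b => hl _ (hq t b)
  choose P hP0 hP using hP
  choose Q hQ0 hQ using hQ
  obtain rfl : e = (((Q 0 0 + Q 0 1) / 2 : ℝ) : ℂ) := by
    have := h3 0
    rw [hQ, hQ] at this
    push_cast
    rw [this]; ring
  simp only [hP, hQ] at h1 h2 h3 ⊢
  have := aux_real P Q ((Q 0 0 + Q 0 1) / 2) hP0 hQ0 (fun t => by exact_mod_cast h1 t)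
    (fun b => by
      apply Complex.ofReal_injective
      have := h2 b
      push_cast
      exact this) (fun t => by exact_mod_cast h3 t)
  exact_mod_cast this

theorem entanglement_witness_from_noncontextuality_inequality {m n : ℕ}
    (ρ : Matrix (Fin m × Fin n) (Fin m × Fin n) ℂ)
    (hρ : IsDensity ρ) (hsep : Separable ρ)
    (E : Fin 3 → Fin 2 → Matrix (Fin n) (Fin n) ℂ)
    (Es : Matrix (Fin n) (Fin n) ℂ)
    (hE : ∀ t b, (E t b).PosSemidef)
    (hEmix : ∀ t, (1 / 2 : ℂ) • (E t 0 + E t 1) = Es)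
    (M : Fin 3 → Fin 2 → Matrix (Fin m) (Fin m) ℂ)
    (hM : ∀ t b, (M t b).PosSemidef)
    (hMsum : ∀ t, M t 0 + M t 1 = 1)
    (hMavg : ∀ b, (1 / 3 : ℂ) • ∑ t, M t b = (1 / 2 : ℂ) • (1 : Matrix (Fin m) (Fin m) ℂ)) :
    ∑ t, ∑ b, (((M t b) ⊗ₖ (E t b)) * ρ).trace ≤
      5 * ((((1 : Matrix (Fin m) (Fin m) ℂ) ⊗ₖ Es)) * ρ).trace := by
  obtain ⟨L, ω, κ, hω, hκ, rfl⟩ := hsep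
  have key : ∀ (A : Matrix (Fin m) (Fin m) ℂ) (B : Matrix (Fin n) (Fin n) ℂ),
      ((A ⊗ₖ B) * ∑ l, ω l ⊗ₖ κ l).trace = ∑ l, (A * ω l).trace * (B * κ l).trace := by
    intro A B
    rw [Finset.mul_sum, Matrix.trace_sum]
    refine Finset.sum_congr rfl fun l _ => ?_
    rw [← Matrix.mul_kronecker_mul, Matrix.trace_kronecker]
  simp only [key]
  have hsw : ∑ t, ∑ b, ∑ l, (M t b * ω l).trace * (E t b * κ l).trace =
      ∑ l, ∑ t, ∑ b, (M t b * ω l).trace * (E t b * κ l).trace := by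
    rw [Finset.sum_comm]
    simp only [Finset.sum_comm (s := (Finset.univ : Finset (Fin L)))]
    rw [Finset.sum_comm]
  rw [hsw, Finset.mul_sum]
  refine Finset.sum_le_sum fun l _ => ?_
  rw [Matrix.one_mul, (hω l).2, one_mul]
  refine aux_complex (fun t b => (M t b * ω l).trace) (fun t b => (E t b * κ l).trace) _
    (fun t b => aux_trace_nonneg (hM t b) (hω l).1) (fun t b => aux_trace_nonneg (hE t b) (hκ l))
    (fun t => ?_) (fun b => ?_) (fun t => ?_)
  · rw [← Matrix.trace_add, ← Matrix.add_mul, hMsum, Matrix.one_mul, (hω l).2]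
  · have h := congrArg (fun X => (X * ω l).trace) (hMavg b)
    simp only [Matrix.smul_mul, Matrix.trace_smul, Matrix.sum_mul, Matrix.trace_sum,
      Matrix.one_mul, (hω l).2, smul_eq_mul] at h
    linear_combination 3 * h
  · rw [← Matrix.trace_add, ← Matrix.add_mul, ← hEmix t, Matrix.smul_mul, Matrix.trace_smul,
      smul_eq_mul]
    ring
end
end

section
/- Let K be a set of density matrices on ℂ^d that admits a preparation-and-measurement noncontextual model. Let σ_* ∈ K and, for i ∈ {1,2}, let σ_{i+}, σ_{i−}, σ_{i0} ∈ cone(K) satisfy σ_{1+} + σ_{1−} + σ_{10} = σ_* = σ_{2+} + σ_{2−} + σ_{20}. Let A₁, A₂ be Hermitian d×d matrices with −I ≤ A_i ≤ I. Then Tr[(A₁ + A₂)(σ_{1+} − σ_{1−})] + Tr[(A₁ − A₂)(σ_{2+} − σ_{2−})] ≤ 2. -/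
open Matrix
open scoped Kronecker ComplexOrder BigOperators

noncomputable section

/-- The cone generated by a set of density matrices: nonnegative real multiples. -/
def coneOf {d : ℕ} (K : Set (Matrix (Fin d) (Fin d) ℂ)) : Set (Matrix (Fin d) (Fin d) ℂ) :=
  {x | ∃ (μ : ℝ) (σ : Matrix (Fin d) (Fin d) ℂ), 0 ≤ μ ∧ σ ∈ K ∧ x = (μ : ℂ) • σ}

open scoped MatrixOrder in
/-- The trace of a product of two positive semidefinite matrices is nonnegative. -/
theorem trace_mul_nonneg_aux {d : ℕ} {P Q : Matrix (Fin d) (Fin d) ℂ}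
    (hP : P.PosSemidef) (hQ : Q.PosSemidef) : 0 ≤ (P * Q).trace := by
  obtain ⟨B, rfl⟩ := CStarAlgebra.nonneg_iff_eq_star_mul_self.mp hP.nonneg
  rw [Matrix.star_eq_conjTranspose]
  rw [Matrix.mul_assoc, Matrix.trace_mul_comm]
  exact (hQ.mul_mul_conjTranspose_same B).trace_nonneg

/-- Real form of the CHSH bound for one value of the hidden variable. -/
theorem real_chsh_aux (a b p m z q n w s : ℝ) (ha : -1 ≤ a) (ha' : a ≤ 1)
    (hb : -1 ≤ b) (hb' : b ≤ 1) (hp : 0 ≤ p) (hm : 0 ≤ m) (hz : 0 ≤ z)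
    (hq : 0 ≤ q) (hn : 0 ≤ n) (hw : 0 ≤ w) (h1 : p + m + z = s) (h2 : q + n + w = s) :
    (a + b) * (p - m) + (a - b) * (q - n) ≤ 2 * s := by
  have key : ∀ c x : ℝ, -1 ≤ c → c ≤ 1 → c * x ≤ |x| := by
    intro c x h h'
    calc c * x ≤ |c * x| := le_abs_self _
      _ = |c| * |x| := abs_mul _ _
      _ ≤ 1 * |x| := by
        have := abs_le.mpr ⟨h, h'⟩
        gcongr
      _ = |x| := one_mul _
  have k1 := key a ((p - m) + (q - n)) ha ha'
  have k2 := key b ((p - m) - (q - n)) hb hb'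
  have k3 : |(p - m) + (q - n)| + |(p - m) - (q - n)| ≤ 2 * s := by
    rcases abs_cases ((p - m) + (q - n)) with h | h <;>
    rcases abs_cases ((p - m) - (q - n)) with h' | h' <;> linarith
  linarith

/-- Complex form (with the complex order) of the CHSH bound. -/
theorem complex_chsh_aux (a b p m z q n w s : ℂ) (ha : 0 ≤ a + 1) (ha' : 0 ≤ 1 - a)
    (hb : 0 ≤ b + 1) (hb' : 0 ≤ 1 - b) (hp : 0 ≤ p) (hm : 0 ≤ m) (hz : 0 ≤ z)
    (hq : 0 ≤ q) (hn : 0 ≤ n) (hw : 0 ≤ w) (h1 : p + m + z = s) (h2 : q + n + w = s) :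
    (a + b) * (p - m) + (a - b) * (q - n) ≤ 2 * s := by
  subst h1
  have h2' := congrArg Complex.re h2
  simp only [Complex.le_def, Complex.add_re, Complex.add_im, Complex.sub_re, Complex.sub_im,
    Complex.one_re, Complex.one_im, Complex.zero_re, Complex.zero_im, Complex.mul_re,
    Complex.mul_im, Complex.re_ofNat, Complex.im_ofNat] at *
  have ea : a.im = 0 := by linarith [ha.2]
  have eb : b.im = 0 := by linarith [hb.2]
  rw [ea, eb, ← hp.2, ← hm.2, ← hz.2, ← hq.2, ← hn.2]
  refine ⟨?_, by ring⟩
  have := real_chsh_aux a.re b.re p.re m.re z.re q.re n.re w.re _ (by linarith [ha.1])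
    (by linarith [ha'.1]) (by linarith [hb.1]) (by linarith [hb'.1]) hp.1 hm.1 hz.1
    hq.1 hn.1 hw.1 rfl h2'
  linarith

theorem chsh_noncontextuality_inequality {d : ℕ}
    (K : Set (Matrix (Fin d) (Fin d) ℂ)) (hK : HasNCModel K)
    (σs : Matrix (Fin d) (Fin d) ℂ) (hσs : σs ∈ K)
    (σ₁p σ₁m σ₁0 σ₂p σ₂m σ₂0 : Matrix (Fin d) (Fin d) ℂ)
    (h₁p : σ₁p ∈ coneOf K) (h₁m : σ₁m ∈ coneOf K) (h₁0 : σ₁0 ∈ coneOf K)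
    (h₂p : σ₂p ∈ coneOf K) (h₂m : σ₂m ∈ coneOf K) (h₂0 : σ₂0 ∈ coneOf K)
    (hsum₁ : σ₁p + σ₁m + σ₁0 = σs) (hsum₂ : σ₂p + σ₂m + σ₂0 = σs)
    (A₁ A₂ : Matrix (Fin d) (Fin d) ℂ)
    (hA₁ : A₁.IsHermitian) (hA₂ : A₂.IsHermitian)
    (hA₁u : (1 - A₁).PosSemidef) (hA₁l : (A₁ + 1).PosSemidef)
    (hA₂u : (1 - A₂).PosSemidef) (hA₂l : (A₂ + 1).PosSemidef) :
    ((A₁ + A₂) * (σ₁p - σ₁m)).trace + ((A₁ - A₂) * (σ₂p - σ₂m)).trace ≤ 2 := by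
  obtain ⟨L, N, ω, _, hω, hpos, hone, hmod⟩ := hK
  have hrep : ∀ A : Matrix (Fin d) (Fin d) ℂ, (1 - A).PosSemidef → (A + 1).PosSemidef →
      ∀ ρ ∈ K, (A * ρ).trace = ∑ l, (ρ * N l).trace * (ω l * A).trace := by
    intro A hu hl ρ hρ
    have c : (0 : ℂ) ≤ 1 / 2 := by
      rw [Complex.le_def]; norm_num
    have e1 := hmod ρ hρ ((1 / 2 : ℂ) • (A + 1)) (hl.smul c) (by
      have : (1 : Matrix (Fin d) (Fin d) ℂ) - (1 / 2 : ℂ) • (A + 1)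
          = (1 / 2 : ℂ) • (1 - A) := by module
      rw [this]
      exact hu.smul c)
    have e2 := hmod ρ hρ 1 Matrix.PosSemidef.one (by
      rw [sub_self]; exact Matrix.PosSemidef.zero)
    have e3 : ∀ X : Matrix (Fin d) (Fin d) ℂ, (X * A).trace
        = 2 * (X * ((1 / 2 : ℂ) • (A + 1))).trace - (X * 1).trace := by
      intro X
      simp only [Matrix.mul_smul, Matrix.mul_add, Matrix.trace_smul, Matrix.trace_add, smul_eq_mul]
      ring
    rw [Matrix.trace_mul_comm, e3, e1, e2, Finset.mul_sum, ← Finset.sum_sub_distrib]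
    refine Finset.sum_congr rfl fun l _ => ?_
    rw [e3 (ω l)]
    ring
  have hrepc : ∀ A : Matrix (Fin d) (Fin d) ℂ, (1 - A).PosSemidef → (A + 1).PosSemidef →
      ∀ ρ ∈ coneOf K, (A * ρ).trace = ∑ l, (ρ * N l).trace * (ω l * A).trace := by
    rintro A hu hl _ ⟨μ, ρ, _, hρ, rfl⟩
    simp only [Matrix.mul_smul, Matrix.smul_mul, Matrix.trace_smul, smul_eq_mul]
    rw [hrep A hu hl ρ hρ, Finset.mul_sum]
    exact Finset.sum_congr rfl fun l _ => by ring
  have hposc : ∀ ρ ∈ coneOf K, ∀ l, 0 ≤ (ρ * N l).trace := by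
    rintro _ ⟨μ, ρ, hμ, hρ, rfl⟩ l
    simp only [Matrix.smul_mul, Matrix.trace_smul, smul_eq_mul]
    exact mul_nonneg (by exact_mod_cast hμ) (hpos ρ hρ l)
  have hu' : ∀ A : Matrix (Fin d) (Fin d) ℂ, (1 - A).PosSemidef → ∀ l,
      0 ≤ 1 - (ω l * A).trace := by
    intro A h l
    have := trace_mul_nonneg_aux (hω l).1 h
    rwa [Matrix.mul_sub, Matrix.trace_sub, Matrix.mul_one, (hω l).2] at this
  have hl' : ∀ A : Matrix (Fin d) (Fin d) ℂ, (A + 1).PosSemidef → ∀ l,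
      0 ≤ (ω l * A).trace + 1 := by
    intro A h l
    have := trace_mul_nonneg_aux (hω l).1 h
    rwa [Matrix.mul_add, Matrix.trace_add, Matrix.mul_one, (hω l).2] at this
  calc ((A₁ + A₂) * (σ₁p - σ₁m)).trace + ((A₁ - A₂) * (σ₂p - σ₂m)).trace
      = ∑ l, (((ω l * A₁).trace + (ω l * A₂).trace)
            * ((σ₁p * N l).trace - (σ₁m * N l).trace)
          + ((ω l * A₁).trace - (ω l * A₂).trace)
            * ((σ₂p * N l).trace - (σ₂m * N l).trace)) := by
        simp only [Matrix.add_mul, Matrix.sub_mul, Matrix.mul_sub, Matrix.trace_add,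
          Matrix.trace_sub]
        rw [hrepc A₁ hA₁u hA₁l _ h₁p, hrepc A₁ hA₁u hA₁l _ h₁m, hrepc A₁ hA₁u hA₁l _ h₂p,
          hrepc A₁ hA₁u hA₁l _ h₂m, hrepc A₂ hA₂u hA₂l _ h₁p, hrepc A₂ hA₂u hA₂l _ h₁m,
          hrepc A₂ hA₂u hA₂l _ h₂p, hrepc A₂ hA₂u hA₂l _ h₂m]
        simp only [← Finset.sum_add_distrib, ← Finset.sum_sub_distrib]
        exact Finset.sum_congr rfl fun l _ => by ring
    _ ≤ ∑ l, 2 * (σs * N l).trace := by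
        refine Finset.sum_le_sum fun l _ => ?_
        refine complex_chsh_aux _ _ _ _ (σ₁0 * N l).trace _ _ (σ₂0 * N l).trace _
          (hl' A₁ hA₁l l) (hu' A₁ hA₁u l) (hl' A₂ hA₂l l) (hu' A₂ hA₂u l)
          (hposc _ h₁p l) (hposc _ h₁m l) (hposc _ h₁0 l)
          (hposc _ h₂p l) (hposc _ h₂m l) (hposc _ h₂0 l) ?_ ?_
        · rw [← hsum₁]; simp only [Matrix.add_mul, Matrix.trace_add]
        · rw [← hsum₂]; simp only [Matrix.add_mul, Matrix.trace_add]
    _ = 2 := by rw [← Finset.mul_sum, hone σs hσs, mul_one]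
end
end
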